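/- Let (b,e,a) be splitting types of ranks m, m+n, n with deg a + deg b = deg e, and let M ≥ 1 be an integer. Let b^{(M)}, e^{(M)}, a^{(M)} denote the splitting types of ranks Mm, M(m+n), Mn obtained by repeating each entry of b, e, a respectively M times (keeping weakly increasing order). If the triple (b^{(M)}, e^{(M)}, a^{(M)}) admits a balancing datum, then (b,e,a) admits a balancing datum. (This is the combinatorial content of the paper's corollary that in projective dimension 2 every integral lattice point of the Boij–Söderberg cone is the Betti diagram of a genuine graded module.) -/

import Mathlib

open Finset

/-- Degree of a 1-based integer tuple of rank `n`. -/
def degT (a : ℕ → ℤ) (n : ℕ) : ℤ := ∑ i ∈ Icc 1 n, a i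

/-- `a` is weakly increasing on indices `1, …, n` (a splitting type of rank `n`). -/
def Incr (a : ℕ → ℤ) (n : ℕ) : Prop := ∀ i j : ℕ, 1 ≤ i → i ≤ j → j ≤ n → a i ≤ a j

/-- `S(μ,ν) = Σ_{i=ν}^n a_i + Σ_{i=μ}^m b_i − Σ_{i=μ+ν−1}^{m+n} e_i`. -/
def Sfun (b e a : ℕ → ℤ) (m n μ ν : ℕ) : ℤ :=
  (∑ i ∈ Icc ν n, a i) + (∑ i ∈ Icc μ m, b i) - ∑ i ∈ Icc (μ + ν - 1) (m + n), e i

/-- `A(μ,ν) = a_ν − e_{μ+ν}`. -/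
def Afun (e a : ℕ → ℤ) (μ ν : ℕ) : ℤ := a ν - e (μ + ν)

/-- `B(μ,ν) = e_{μ+ν−1} − b_μ`. -/
def Bfun (b e : ℕ → ℤ) (μ ν : ℕ) : ℤ := e (μ + ν - 1) - b μ

/-- `h_μ = min{ν : 1 ≤ ν ≤ n+1, S(μ,ν') < 0 for all ν' with ν < ν' ≤ n+1}`. -/
noncomputable def hfun (b e a : ℕ → ℤ) (m n μ : ℕ) : ℕ :=
  sInf {ν : ℕ | 1 ≤ ν ∧ ν ≤ n + 1 ∧ ∀ ν', ν < ν' → ν' ≤ n + 1 → Sfun b e a m n μ ν' < 0}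

/-- Weak eligibility of a triple `(b,e,a)` of ranks `m, m+n, n`. -/
def WeaklyEligible (b e a : ℕ → ℤ) (m n : ℕ) : Prop :=
  degT a n + degT b m = degT e (m + n) ∧
  (∀ i, 1 ≤ i → i ≤ n → e i ≤ a i) ∧
  (∀ i, 1 ≤ i → i ≤ m → b i ≤ e (n + i))

/-- The realizability criterion: weakly eligible, and `A(μ,ν) ≥ 0`, `B(μ,ν) ≥ 0`
whenever `1 ≤ μ ≤ m`, `1 ≤ ν ≤ n` and `ν ≥ h_μ`. -/
def RealizCrit (b e a : ℕ → ℤ) (m n : ℕ) : Prop :=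
  WeaklyEligible b e a m n ∧
  ∀ μ ν, 1 ≤ μ → μ ≤ m → 1 ≤ ν → ν ≤ n → hfun b e a m n μ ≤ ν →
    0 ≤ Afun e a μ ν ∧ 0 ≤ Bfun b e μ ν

/-- `f ≥ g` in the balancedness partial order (for tuples of rank `n`):
all prefix sums of `f` dominate those of `g`. -/
def MoreBal (f g : ℕ → ℤ) (n : ℕ) : Prop :=
  ∀ k, k ≤ n → (∑ i ∈ Icc 1 k, g i) ≤ ∑ i ∈ Icc 1 k, f i

/-- `f > g` in the balancedness partial order: `f ≥ g` and `f ≠ g` (on indices `1..n`). -/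
def StrictMoreBal (f g : ℕ → ℤ) (n : ℕ) : Prop :=
  MoreBal f g n ∧ ∃ i, 1 ≤ i ∧ i ≤ n ∧ f i ≠ g i

/-- `hom(u,v) = Σ_i Σ_j max(0, v_j − u_i + 1)`, the dimension of
`Hom(O(u), O(v))` on `P¹`. -/
def homT (u : ℕ → ℤ) (p : ℕ) (v : ℕ → ℤ) (q : ℕ) : ℤ :=
  ∑ i ∈ Icc 1 p, ∑ j ∈ Icc 1 q, max 0 (v j - u i + 1)

/-- `(σ, τ, Γ)` is a balancing datum for the triple `(b,e,a)` of ranks `m, m+n, n`. -/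
def IsBalDatum (b e a : ℕ → ℤ) (m n : ℕ) (σ τ : ℕ → ℕ) (Γ : ℕ → ℕ → ℕ) : Prop :=
  (∀ j ∈ Icc 1 n, σ j ∈ Icc 1 (m + n)) ∧
  (∀ i ∈ Icc 1 m, τ i ∈ Icc 1 (m + n)) ∧
  Set.InjOn σ ↑(Icc 1 n) ∧
  Set.InjOn τ ↑(Icc 1 m) ∧
  (∀ i ∈ Icc 1 m, ∀ j ∈ Icc 1 n, τ i ≠ σ j) ∧
  (∀ x ∈ Icc 1 (m + n), (∃ j ∈ Icc 1 n, σ j = x) ∨ (∃ i ∈ Icc 1 m, τ i = x)) ∧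
  (∀ i ∈ Icc 1 m, ∀ j ∈ Icc 1 n, Γ i j ≠ 0 →
    b i < e (τ i) ∧ e (τ i) ≤ e (σ j) ∧ e (σ j) < a j ∧
    (Γ i j : ℤ) ≤ e (τ i) - b i ∧ (Γ i j : ℤ) ≤ a j - e (σ j)) ∧
  (∀ i ∈ Icc 1 m, (∑ j ∈ Icc 1 n, (Γ i j : ℤ)) = e (τ i) - b i) ∧
  (∀ j ∈ Icc 1 n, (∑ i ∈ Icc 1 m, (Γ i j : ℤ)) = a j - e (σ j))

/-- The triple `(b,e,a)` admits a balancing datum. -/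
def HasBalDatum (b e a : ℕ → ℤ) (m n : ℕ) : Prop :=
  ∃ σ τ Γ, IsBalDatum b e a m n σ τ Γ

/-- The tuple obtained by repeating each entry of `u` exactly `M` times
(1-based indexing). -/
def repT (u : ℕ → ℤ) (M : ℕ) : ℕ → ℤ := fun i => u ((i - 1) / M + 1)

/-!
For weakly increasing tuples of matching degree, a balancing datum exists exactly when some lattice
path satisfies the inequalities of `IsBalPath`. A datum yields a path by listing the entries
`e (σ j)` and `e (τ i)` by increasing value, with the `τ`-entries first among equals. Conversely,
let `σ` and `τ` be the positions of the two kinds of steps and ship the supplies `e (τ i) - b i` to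
the demands `a j - e (σ j)` by the northwest-corner rule: the partial-sum inequality says that
supply never runs behind demand, so everything flows from earlier to later positions, as a datum
requires.

Paths descend along repetition: rounding a path `R` for the `M`-fold repetition up to whole blocks,
`q ↦ ⌈R (M q) / M⌉`, preserves the inequalities, and on whole blocks the partial sums for the
repeated tuples are `M` times those for the original ones.
-/

section Counting

variable {α : Type*} [LinearOrder α]

/-- The number of entries of the tuple `f 1, …, f N` that are smaller than `v`. -/
def countLT (f : ℕ → α) (N : ℕ) (v : α) : ℕ := #{k ∈ Icc 1 N | f k < v}

theorem countLT_le (f : ℕ → α) (N : ℕ) (v : α) : countLT f N v ≤ N := by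
  simpa [countLT] using card_filter_le (Icc 1 N) (fun k => f k < v)

theorem countLT_mono (f : ℕ → α) (N : ℕ) : Monotone (countLT f N) := fun _ _ hvw =>
  card_le_card (monotone_filter_right _ fun _ _ hk => hk.trans_le hvw)

theorem countLT_anti {f g : ℕ → α} {N : ℕ} (hfg : ∀ k ∈ Icc 1 N, f k ≤ g k) (v : α) :
    countLT g N v ≤ countLT f N v :=
  card_le_card (monotone_filter_right _ fun k hk hgk => (hfg k hk).trans_lt hgk)

theorem le_countLT_iff {f : ℕ → α} {N k : ℕ} (hf : MonotoneOn f (Set.Icc 1 N))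
    (hk : k ∈ Icc 1 N) (v : α) : k ≤ countLT f N v ↔ f k < v := by
  obtain ⟨hk1, hkN⟩ := mem_Icc.1 hk
  constructor
  · contrapose!
    intro hv
    have hsub : {i ∈ Icc 1 N | f i < v} ⊆ Icc 1 (k - 1) := by
      intro i hi
      obtain ⟨hiN, hiv⟩ := mem_filter.1 hi
      have hik : i < k := by
        by_contra! hki
        exact hiv.not_ge (hv.trans (hf ⟨hk1, hkN⟩ (mem_Icc.1 hiN) hki))
      rw [mem_Icc] at hiN ⊢
      omega
    have hcard := card_le_card hsub
    rw [Nat.card_Icc] at hcard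
    rw [countLT]
    omega
  · intro hv
    have hsub : Icc 1 k ⊆ {i ∈ Icc 1 N | f i < v} := by
      intro i hi
      obtain ⟨hi1, hik⟩ := mem_Icc.1 hi
      have hiN : i ≤ N := hik.trans hkN
      exact mem_filter.2 ⟨mem_Icc.2 ⟨hi1, hiN⟩, (hf ⟨hi1, hiN⟩ ⟨hk1, hkN⟩ hik).trans_lt hv⟩
    simpa [countLT] using card_le_card hsub

/-- The least `v` such that at least `k` of the integers `f 1, …, f N` are smaller than `v`; for
`1 ≤ k ≤ N` this is one more than the `k`-th smallest of them. -/
noncomputable def rankThreshold (f : ℕ → ℤ) (N k : ℕ) : ℤ := sInf {v | k ≤ countLT f N v}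

theorem rankThreshold_le_iff {f : ℕ → ℤ} {N k : ℕ} (hk : k ∈ Icc 1 N) (v : ℤ) :
    rankThreshold f N k ≤ v ↔ k ≤ countLT f N v := by
  obtain ⟨hk1, hkN⟩ := mem_Icc.1 hk
  obtain ⟨lo, hlo⟩ := ((Icc 1 N).image f).bddBelow
  obtain ⟨hi, hhi⟩ := ((Icc 1 N).image f).bddAbove
  have hbdd : BddBelow {v | k ≤ countLT f N v} := by
    refine ⟨lo, fun v hv => ?_⟩
    obtain ⟨i, hi⟩ : {i ∈ Icc 1 N | f i < v}.Nonempty := card_pos.1 (hk1.trans hv)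
    obtain ⟨hiN, hiv⟩ := mem_filter.1 hi
    exact (hlo (mem_coe.2 (mem_image_of_mem f hiN))).trans hiv.le
  have hne : {v | k ≤ countLT f N v}.Nonempty := by
    refine ⟨hi + 1, ?_⟩
    have hall : ∀ i ∈ Icc 1 N, f i < hi + 1 := fun i hiN =>
      Int.lt_add_one_of_le (hhi (mem_coe.2 (mem_image_of_mem f hiN)))
    rwa [Set.mem_ofPred_eq, countLT, filter_true_of_mem hall, Nat.card_Icc, Nat.add_sub_cancel]
  exact ⟨fun hv => (Int.csInf_mem hne hbdd).trans (countLT_mono f N hv), fun hv => csInf_le hbdd hv⟩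

end Counting

section Sums

theorem sum_le_sum_of_card_eq_of_le {ι α : Type*} [DecidableEq ι] [AddCommGroup α] [PartialOrder α]
    [IsOrderedAddMonoid α] {s t : Finset ι} {f : ι → α} {v : α} (hcard : #s = #t)
    (hs : ∀ i ∈ s \ t, f i ≤ v) (ht : ∀ i ∈ t \ s, v ≤ f i) : ∑ i ∈ s, f i ≤ ∑ i ∈ t, f i := by
  refine sum_sdiff_le_sum_sdiff.1 ?_
  calc ∑ i ∈ s \ t, f i ≤ #(s \ t) • v := sum_le_card_nsmul _ _ _ hs
    _ = #(t \ s) • v := by rw [card_sdiff_comm hcard]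
    _ ≤ ∑ i ∈ t \ s, f i := card_nsmul_le_sum _ _ _ ht

theorem Incr.monotoneOn {f : ℕ → ℤ} {N : ℕ} (hf : Incr f N) : MonotoneOn f (Set.Icc 1 N) :=
  fun _ hi _ hj hij => hf _ _ hi.1 hij hj.2

theorem Incr.sum_Icc_card_le {f : ℕ → ℤ} {N : ℕ} (hf : Incr f N) {s : Finset ℕ}
    (hs : s ⊆ Icc 1 N) : ∑ i ∈ Icc 1 #s, f i ≤ ∑ i ∈ s, f i := by
  have hsN : #s ≤ N := by simpa using card_le_card hs
  refine sum_le_sum_of_card_eq_of_le (v := f #s) (by simp) (fun i hi => ?_) (fun i hi => ?_)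
  · obtain ⟨hi1, his⟩ := mem_Icc.1 (mem_sdiff.1 hi).1
    exact hf i #s hi1 his hsN
  · obtain ⟨his, hi'⟩ := mem_sdiff.1 hi
    obtain ⟨hi1, hiN⟩ := mem_Icc.1 (hs his)
    have hlt : #s < i := by simpa [hi1] using hi'
    exact hf #s i (card_pos.2 ⟨i, his⟩) hlt.le hiN

theorem sum_Icc_one_sub_one_add {α : Type*} [AddCommMonoid α] (f : ℕ → α) {i : ℕ} (hi : 1 ≤ i) :
    ∑ k ∈ Icc 1 (i - 1), f k + f i = ∑ k ∈ Icc 1 i, f k := by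
  obtain ⟨i, rfl⟩ := Nat.exists_eq_add_of_le' hi
  rw [sum_Icc_succ_top (by omega), Nat.add_sub_cancel]

theorem sum_Icc_one_le_of_nonneg {α : Type*} [AddCommMonoid α] [PartialOrder α]
    [IsOrderedAddMonoid α] {f : ℕ → α} {N i j : ℕ} (hf : ∀ k ∈ Icc 1 N, 0 ≤ f k) (hij : i ≤ j)
    (hj : j ≤ N) : ∑ k ∈ Icc 1 i, f k ≤ ∑ k ∈ Icc 1 j, f k :=
  sum_le_sum_of_subset_of_nonneg (Icc_subset_Icc_right hij)
    fun k hk _ => hf k (Icc_subset_Icc_right hj hk)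

end Sums

section NorthwestCorner

/-- The northwest-corner transport plan from the supplies `u` to the demands `v`: lay the `u i` end
to end along a line, and likewise the `v j`; the amount sent from `i` to `j` is the length of the
overlap of the `i`-th supply interval with the `j`-th demand interval. -/
def cornerPlan (u v : ℕ → ℤ) (i j : ℕ) : ℕ :=
  (min (∑ k ∈ Icc 1 i, u k) (∑ k ∈ Icc 1 j, v k) -
    max (∑ k ∈ Icc 1 (i - 1), u k) (∑ k ∈ Icc 1 (j - 1), v k)).toNat

theorem cornerPlan_comm (u v : ℕ → ℤ) (i j : ℕ) : cornerPlan u v i j = cornerPlan v u j i := by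
  rw [cornerPlan, cornerPlan, min_comm, max_comm]

theorem sum_lt_sum_of_cornerPlan_ne_zero {u v : ℕ → ℤ} {i j : ℕ} (h : cornerPlan u v i j ≠ 0) :
    ∑ k ∈ Icc 1 (i - 1), u k < ∑ k ∈ Icc 1 j, v k := by
  rw [cornerPlan] at h
  omega

theorem pos_of_cornerPlan_ne_zero {u v : ℕ → ℤ} {i j : ℕ} (hi : 1 ≤ i)
    (h : cornerPlan u v i j ≠ 0) : 0 < u i := by
  have hu := sum_Icc_one_sub_one_add u hi
  rw [cornerPlan] at h
  omega

variable {u v : ℕ → ℤ} {m n : ℕ}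

theorem sum_cornerPlan (hu : ∀ i ∈ Icc 1 m, 0 ≤ u i) (hv : ∀ j ∈ Icc 1 n, 0 ≤ v j)
    (huv : ∑ i ∈ Icc 1 m, u i = ∑ j ∈ Icc 1 n, v j) {i : ℕ} (hi : i ∈ Icc 1 m) :
    ∑ j ∈ Icc 1 n, (cornerPlan u v i j : ℤ) = u i := by
  obtain ⟨hi1, him⟩ := mem_Icc.1 hi
  set U : ℕ → ℤ := fun i => ∑ k ∈ Icc 1 i, u k
  set V : ℕ → ℤ := fun j => ∑ k ∈ Icc 1 j, v k
  have hstep : U (i - 1) + u i = U i := sum_Icc_one_sub_one_add u hi1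
  have hui := hu i hi
  have hpartial : ∀ j ≤ n, ∑ k ∈ Icc 1 j, (cornerPlan u v i k : ℤ) =
      max (U (i - 1)) (min (U i) (V j)) - max (U (i - 1)) (min (U i) (V 0)) := by
    intro j hj
    induction j with
    | zero => simp
    | succ j ih =>
      have hVj : V j ≤ V (j + 1) := sum_Icc_one_le_of_nonneg hv (Nat.le_succ j) hj
      rw [sum_Icc_succ_top (by omega), ih (by omega), cornerPlan, Nat.add_sub_cancel]
      change _ + (((min (U i) (V (j + 1)) - max (U (i - 1)) (V j)).toNat : ℕ) : ℤ) = _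
      omega
  have hU0 : (0 : ℤ) ≤ U (i - 1) := sum_Icc_one_le_of_nonneg hu (Nat.zero_le _) (by omega)
  have hUm : U i ≤ V n := (sum_Icc_one_le_of_nonneg hu him le_rfl).trans_eq huv
  have hV0 : V 0 = 0 := rfl
  rw [hpartial n le_rfl]
  omega

theorem cornerPlan_le (hu : ∀ i ∈ Icc 1 m, 0 ≤ u i) (hv : ∀ j ∈ Icc 1 n, 0 ≤ v j)
    (huv : ∑ i ∈ Icc 1 m, u i = ∑ j ∈ Icc 1 n, v j) {i j : ℕ} (hi : i ∈ Icc 1 m)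
    (hj : j ∈ Icc 1 n) : (cornerPlan u v i j : ℤ) ≤ u i :=
  sum_cornerPlan hu hv huv hi ▸
    single_le_sum (f := fun j => (cornerPlan u v i j : ℤ)) (fun _ _ => Nat.cast_nonneg _) hj

end NorthwestCorner

section Shuffle

/-- `σ` on `{1, …, n}` and `τ` on `{1, …, m}` together form a bijection onto `{1, …, m + n}`.
Surjectivity is not a field, being forced by the cardinalities. -/
structure IsShuffle (m n : ℕ) (σ τ : ℕ → ℕ) : Prop where
  mapsTo_left : ∀ j ∈ Icc 1 n, σ j ∈ Icc 1 (m + n)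
  mapsTo_right : ∀ i ∈ Icc 1 m, τ i ∈ Icc 1 (m + n)
  injOn_left : Set.InjOn σ ↑(Icc 1 n)
  injOn_right : Set.InjOn τ ↑(Icc 1 m)
  ne : ∀ i ∈ Icc 1 m, ∀ j ∈ Icc 1 n, τ i ≠ σ j

namespace IsShuffle

variable {m n : ℕ} {σ τ : ℕ → ℕ} {I J : Finset ℕ}

theorem union_subset (h : IsShuffle m n σ τ) (hJ : J ⊆ Icc 1 n) (hI : I ⊆ Icc 1 m) :
    J.image σ ∪ I.image τ ⊆ Icc 1 (m + n) :=
  Finset.union_subset (image_subset_iff.2 fun j hj => h.mapsTo_left j (hJ hj))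
    (image_subset_iff.2 fun i hi => h.mapsTo_right i (hI hi))

theorem sum_union {β : Type*} [AddCommMonoid β] (h : IsShuffle m n σ τ) (hJ : J ⊆ Icc 1 n)
    (hI : I ⊆ Icc 1 m) (g : ℕ → β) :
    ∑ k ∈ J.image σ ∪ I.image τ, g k = ∑ j ∈ J, g (σ j) + ∑ i ∈ I, g (τ i) := by
  have hdisj : Disjoint (J.image σ) (I.image τ) := by
    simp only [disjoint_left, mem_image]
    rintro _ ⟨j, hj, rfl⟩ ⟨i, hi, hij⟩
    exact h.ne i (hI hi) j (hJ hj) hij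
  rw [Finset.sum_union hdisj, sum_image (h.injOn_left.mono (coe_subset.2 hJ)),
    sum_image (h.injOn_right.mono (coe_subset.2 hI))]

theorem card_union (h : IsShuffle m n σ τ) (hJ : J ⊆ Icc 1 n) (hI : I ⊆ Icc 1 m) :
    #(J.image σ ∪ I.image τ) = #J + #I := by
  simpa only [card_eq_sum_ones] using h.sum_union hJ hI fun _ => 1

theorem image_union_image (h : IsShuffle m n σ τ) :
    (Icc 1 n).image σ ∪ (Icc 1 m).image τ = Icc 1 (m + n) := by
  refine eq_of_subset_of_card_le (h.union_subset Subset.rfl Subset.rfl) ?_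
  rw [h.card_union Subset.rfl Subset.rfl]
  simp [add_comm]

theorem sum_Icc {β : Type*} [AddCommMonoid β] (h : IsShuffle m n σ τ) (g : ℕ → β) :
    ∑ k ∈ Icc 1 (m + n), g k = ∑ j ∈ Icc 1 n, g (σ j) + ∑ i ∈ Icc 1 m, g (τ i) := by
  rw [← h.image_union_image, h.sum_union Subset.rfl Subset.rfl]

theorem countLT_eq {α : Type*} [LinearOrder α] (h : IsShuffle m n σ τ) (f : ℕ → α) (v : α) :
    countLT f (m + n) v = countLT (f ∘ σ) n v + countLT (f ∘ τ) m v := by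
  simp only [countLT, card_filter, h.sum_Icc, Function.comp_apply]

theorem sum_add_sum_le {α : Type*} [AddCommGroup α] [PartialOrder α] [IsOrderedAddMonoid α]
    (h : IsShuffle m n σ τ) (hJ : J ⊆ Icc 1 n) (hI : I ⊆ Icc 1 m) {f : ℕ → α} {v : α}
    (hJv : ∀ j ∈ J, f (σ j) ≤ v) (hIv : ∀ i ∈ I, f (τ i) ≤ v)
    (hJv' : ∀ j ∈ Icc 1 n, j ∉ J → v ≤ f (σ j)) (hIv' : ∀ i ∈ Icc 1 m, i ∉ I → v ≤ f (τ i)) :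
    ∑ j ∈ J, f (σ j) + ∑ i ∈ I, f (τ i) ≤ ∑ k ∈ Icc 1 (#J + #I), f k := by
  have hcard := h.card_union hJ hI
  have hle : #J + #I ≤ m + n := by
    simpa [hcard] using card_le_card (h.union_subset hJ hI)
  rw [← h.sum_union hJ hI]
  refine sum_le_sum_of_card_eq_of_le (v := v) (by simp [hcard]) (fun k hk => ?_) (fun k hk => ?_)
  · rcases mem_union.1 (mem_sdiff.1 hk).1 with hk | hk
    · obtain ⟨j, hj, rfl⟩ := mem_image.1 hk
      exact hJv j hj
    · obtain ⟨i, hi, rfl⟩ := mem_image.1 hk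
      exact hIv i hi
  · obtain ⟨hk, hk'⟩ := mem_sdiff.1 hk
    rw [mem_union, not_or] at hk'
    have hkmn := Icc_subset_Icc_right hle hk
    rw [← h.image_union_image, mem_union, mem_image, mem_image] at hkmn
    rcases hkmn with ⟨j, hj, rfl⟩ | ⟨i, hi, rfl⟩
    · exact hJv' j hj fun hjJ => hk'.1 (mem_image_of_mem σ hjJ)
    · exact hIv' i hi fun hiI => hk'.2 (mem_image_of_mem τ hiI)

end IsShuffle

end Shuffle

/-- A balancing path for `(b, e, a)`: the combinatorial certificate that characterizes the existence
of a balancing datum for splitting types. `R` encodes the lattice path with `m` steps of type `b`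
and `n` steps of type `a` in which `R q` steps of type `b` precede the `q`-th step of type `a`. -/
structure IsBalPath (b e a : ℕ → ℤ) (m n : ℕ) (R : ℕ → ℕ) : Prop where
  monotoneOn : MonotoneOn R (Set.Icc 1 n)
  le : ∀ q ∈ Icc 1 n, R q ≤ m
  e_le_a : ∀ q ∈ Icc 1 n, e (q + R q) ≤ a q
  b_le_e : ∀ q ∈ Icc 1 n, ∀ p ∈ Icc 1 (R q), b p ≤ e (p + q - 1)
  b_le_e_top : ∀ p ∈ Icc 1 m, b p ≤ e (p + n)
  sum_le : ∀ q ∈ Icc 1 n,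
    ∑ j ∈ Icc 1 q, a j + ∑ i ∈ Icc 1 (R q), b i ≤ ∑ k ∈ Icc 1 (q + R q), e k

section PathPositions

/-- The position of the `q`-th step of type `a` in the lattice path encoded by `R`. -/
def aStep (R : ℕ → ℕ) (q : ℕ) : ℕ := q + R q

/-- The position of the `p`-th step of type `b` in the lattice path encoded by `R`: it is preceded
by the steps `q` of type `a` with `R q < p`. -/
def bStep (R : ℕ → ℕ) (n p : ℕ) : ℕ := p + countLT R n p

variable {R : ℕ → ℕ} {m n : ℕ}

theorem strictMonoOn_aStep (hR : MonotoneOn R (Set.Icc 1 n)) :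
    StrictMonoOn (aStep R) (Set.Icc 1 n) :=
  fun _ hi _ hj hij => add_lt_add_of_lt_of_le hij (hR hi hj hij.le)

theorem strictMono_bStep (R : ℕ → ℕ) (n : ℕ) : StrictMono (bStep R n) :=
  fun _ _ hij => add_lt_add_of_lt_of_le hij (countLT_mono R n hij.le)

theorem bStep_lt_aStep (hR : MonotoneOn R (Set.Icc 1 n)) {p q : ℕ} (hq : q ∈ Icc 1 n)
    (hpq : p ≤ R q) : bStep R n p < aStep R q := by
  have hcount : ¬ q ≤ countLT R n p := by rwa [le_countLT_iff hR hq, not_lt]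
  rw [bStep, aStep]
  omega

theorem aStep_lt_bStep (hR : MonotoneOn R (Set.Icc 1 n)) {p q : ℕ} (hq : q ∈ Icc 1 n)
    (hqp : R q < p) : aStep R q < bStep R n p := by
  have hcount : q ≤ countLT R n p := by rwa [le_countLT_iff hR hq]
  rw [bStep, aStep]
  omega

theorem bStep_ne_aStep (hR : MonotoneOn R (Set.Icc 1 n)) {p q : ℕ} (hq : q ∈ Icc 1 n) :
    bStep R n p ≠ aStep R q := by
  rcases le_or_gt p (R q) with hpq | hqp
  · exact (bStep_lt_aStep hR hq hpq).ne
  · exact (aStep_lt_bStep hR hq hqp).ne'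

theorem isShuffle_aStep_bStep (hR : MonotoneOn R (Set.Icc 1 n)) (hRm : ∀ q ∈ Icc 1 n, R q ≤ m) :
    IsShuffle m n (aStep R) (bStep R n) where
  mapsTo_left q hq := by
    have := hRm q hq
    rw [mem_Icc] at hq ⊢
    rw [aStep]
    omega
  mapsTo_right p hp := by
    have := countLT_le R n p
    rw [mem_Icc] at hp ⊢
    rw [bStep]
    omega
  injOn_left := by
    rw [coe_Icc]
    exact (strictMonoOn_aStep hR).injOn
  injOn_right := (strictMono_bStep R n).injective.injOn
  ne _ _ _ hq := bStep_ne_aStep hR hq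

theorem isShuffle_aStep_bStep_prefix (hR : MonotoneOn R (Set.Icc 1 n)) {q : ℕ}
    (hq : q ∈ Icc 1 n) : IsShuffle (R q) q (aStep R) (bStep R n) where
  mapsTo_left j hj := by
    obtain ⟨hj1, hjq⟩ := mem_Icc.1 hj
    have hqn := mem_Icc.1 hq
    have := hR ⟨hj1, hjq.trans hqn.2⟩ hqn hjq
    rw [mem_Icc, aStep]
    omega
  mapsTo_right p hp := by
    obtain ⟨hp1, hpq⟩ := mem_Icc.1 hp
    have hlt := bStep_lt_aStep hR hq hpq
    rw [bStep, aStep] at hlt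
    rw [mem_Icc, bStep]
    omega
  injOn_left := by
    rw [coe_Icc]
    exact ((strictMonoOn_aStep hR).mono (Set.Icc_subset_Icc_right (mem_Icc.1 hq).2)).injOn
  injOn_right := (strictMono_bStep R n).injective.injOn
  ne _ _ _ hj := bStep_ne_aStep hR (Icc_subset_Icc_right (mem_Icc.1 hq).2 hj)

end PathPositions

namespace IsBalPath

variable {b e a : ℕ → ℤ} {m n : ℕ} {R : ℕ → ℕ}

theorem sub_aStep_nonneg (h : IsBalPath b e a m n R) :
    ∀ q ∈ Icc 1 n, 0 ≤ a q - e (aStep R q) :=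
  fun q hq => sub_nonneg.2 (h.e_le_a q hq)

theorem bStep_sub_nonneg (h : IsBalPath b e a m n R) :
    ∀ p ∈ Icc 1 m, 0 ≤ e (bStep R n p) - b p := by
  intro p hp
  rw [sub_nonneg, bStep]
  rcases (countLT_le R n p).eq_or_lt with hcount | hcount
  · rw [hcount]
    exact h.b_le_e_top p hp
  · have hq : countLT R n p + 1 ∈ Icc 1 n := mem_Icc.2 ⟨by omega, hcount⟩
    have hpR : p ≤ R (countLT R n p + 1) := by
      rw [← not_lt, ← le_countLT_iff h.monotoneOn hq]
      omega
    exact h.b_le_e _ hq p (mem_Icc.2 ⟨(mem_Icc.1 hp).1, hpR⟩)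

theorem sum_sub_aStep_le (h : IsBalPath b e a m n R) {q : ℕ} (hq : q ∈ Icc 1 n) :
    ∑ j ∈ Icc 1 q, (a j - e (aStep R j)) ≤ ∑ i ∈ Icc 1 (R q), (e (bStep R n i) - b i) := by
  have hsum := (isShuffle_aStep_bStep_prefix h.monotoneOn hq).sum_Icc e
  have hle := h.sum_le q hq
  rw [add_comm q] at hle
  rw [sum_sub_distrib, sum_sub_distrib]
  linarith

theorem sum_bStep_sub_eq (h : IsBalPath b e a m n R) (hdeg : degT a n + degT b m = degT e (m + n)) :
    ∑ i ∈ Icc 1 m, (e (bStep R n i) - b i) = ∑ j ∈ Icc 1 n, (a j - e (aStep R j)) := by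
  have hsum := (isShuffle_aStep_bStep h.monotoneOn h.le).sum_Icc e
  rw [degT, degT, degT] at hdeg
  rw [sum_sub_distrib, sum_sub_distrib]
  linarith

-- By `sum_sub_aStep_le`, the demands up to `j` are met by the supplies up to `R j`, so the
-- northwest-corner plan never sends anything from a later step `b i` to an earlier step `a j`.
theorem le_of_cornerPlan_ne_zero (h : IsBalPath b e a m n R) {i j : ℕ} (hi : i ∈ Icc 1 m)
    (hj : j ∈ Icc 1 n)
    (hij : cornerPlan (fun i => e (bStep R n i) - b i) (fun j => a j - e (aStep R j)) i j ≠ 0) :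
    i ≤ R j := by
  by_contra! hRi
  refine (sum_lt_sum_of_cornerPlan_ne_zero hij).not_ge ((h.sum_sub_aStep_le hj).trans ?_)
  have him := (mem_Icc.1 hi).2
  exact sum_Icc_one_le_of_nonneg h.bStep_sub_nonneg (by omega) (by omega)

theorem hasBalDatum (h : IsBalPath b e a m n R) (he : Incr e (m + n))
    (hdeg : degT a n + degT b m = degT e (m + n)) : HasBalDatum b e a m n := by
  have hsh := isShuffle_aStep_bStep h.monotoneOn h.le
  have hu := h.bStep_sub_nonneg
  have hv := h.sub_aStep_nonneg
  have huv := h.sum_bStep_sub_eq hdeg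
  refine ⟨aStep R, bStep R n,
    cornerPlan (fun i => e (bStep R n i) - b i) (fun j => a j - e (aStep R j)),
    hsh.mapsTo_left, hsh.mapsTo_right, hsh.injOn_left, hsh.injOn_right, hsh.ne,
    fun x hx => ?_, fun i hi j hj hne => ⟨?_, ?_, ?_, ?_, ?_⟩,
    fun i hi => sum_cornerPlan hu hv huv hi, fun j hj => ?_⟩
  · rw [← hsh.image_union_image, mem_union, mem_image, mem_image] at hx
    exact hx
  · exact sub_pos.1 (pos_of_cornerPlan_ne_zero (mem_Icc.1 hi).1 hne)
  · have hlt := bStep_lt_aStep h.monotoneOn hj (h.le_of_cornerPlan_ne_zero hi hj hne)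
    exact he _ _ (mem_Icc.1 (hsh.mapsTo_right i hi)).1 hlt.le (mem_Icc.1 (hsh.mapsTo_left j hj)).2
  · rw [cornerPlan_comm] at hne
    exact sub_pos.1 (pos_of_cornerPlan_ne_zero (mem_Icc.1 hj).1 hne)
  · exact cornerPlan_le hu hv huv hi hj
  · rw [cornerPlan_comm]
    exact cornerPlan_le hv hu huv.symm hj hi
  · simp only [cornerPlan_comm (fun i => e (bStep R n i) - b i)]
    exact sum_cornerPlan hv hu huv.symm hj

end IsBalPath

/-- The lattice path attached to a balancing datum `(σ, τ, Γ)`: order the entries `e (σ j)` and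
`e (τ i)` by value, those coming from `τ` first among equals, and let `q ↦ datumPath e m n σ τ q`
be the number of `τ`-entries preceding the `q`-th `σ`-entry. -/
noncomputable def datumPath (e : ℕ → ℤ) (m n : ℕ) (σ τ : ℕ → ℕ) (q : ℕ) : ℕ :=
  countLT (e ∘ τ) m (rankThreshold (e ∘ σ) n q)

theorem monotoneOn_datumPath (e : ℕ → ℤ) (m n : ℕ) (σ τ : ℕ → ℕ) :
    MonotoneOn (datumPath e m n σ τ) (Set.Icc 1 n) := by
  intro q hq q' hq' hqq'
  refine countLT_mono _ _ ((rankThreshold_le_iff (mem_Icc.2 hq) _).2 (hqq'.trans ?_))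
  exact (rankThreshold_le_iff (mem_Icc.2 hq') _).1 le_rfl

namespace IsBalDatum

variable {b e a : ℕ → ℤ} {m n : ℕ} {σ τ : ℕ → ℕ} {Γ : ℕ → ℕ → ℕ}

theorem isShuffle (h : IsBalDatum b e a m n σ τ Γ) : IsShuffle m n σ τ :=
  let ⟨hσ, hτ, hσinj, hτinj, hne, _⟩ := h
  ⟨hσ, hτ, hσinj, hτinj, hne⟩

theorem le_of_ne_zero (h : IsBalDatum b e a m n σ τ Γ) {i j : ℕ} (hi : i ∈ Icc 1 m)
    (hj : j ∈ Icc 1 n) (hij : Γ i j ≠ 0) : e (τ i) ≤ e (σ j) :=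
  let ⟨_, _, _, _, _, _, hΓ, _⟩ := h
  (hΓ i hi j hj hij).2.1

theorem row_sum (h : IsBalDatum b e a m n σ τ Γ) {i : ℕ} (hi : i ∈ Icc 1 m) :
    ∑ j ∈ Icc 1 n, (Γ i j : ℤ) = e (τ i) - b i :=
  let ⟨_, _, _, _, _, _, _, hrow, _⟩ := h
  hrow i hi

theorem column_sum (h : IsBalDatum b e a m n σ τ Γ) {j : ℕ} (hj : j ∈ Icc 1 n) :
    ∑ i ∈ Icc 1 m, (Γ i j : ℤ) = a j - e (σ j) :=
  let ⟨_, _, _, _, _, _, _, _, hcol⟩ := h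
  hcol j hj

theorem b_le_e (h : IsBalDatum b e a m n σ τ Γ) : ∀ i ∈ Icc 1 m, b i ≤ e (τ i) := fun _ hi =>
  sub_nonneg.1 (h.row_sum hi ▸ sum_nonneg fun _ _ => Nat.cast_nonneg _)

theorem e_le_a (h : IsBalDatum b e a m n σ τ Γ) : ∀ j ∈ Icc 1 n, e (σ j) ≤ a j := fun _ hj =>
  sub_nonneg.1 (h.column_sum hj ▸ sum_nonneg fun _ _ => Nat.cast_nonneg _)

-- If the rows `I` contain every row that may feed a column in `J`, then they supply all of `J`.
theorem sum_add_sum_le (h : IsBalDatum b e a m n σ τ Γ) {I J : Finset ℕ} (hJ : J ⊆ Icc 1 n)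
    (hI : I ⊆ Icc 1 m) (hIJ : ∀ j ∈ J, ∀ i ∈ Icc 1 m, e (τ i) ≤ e (σ j) → i ∈ I) :
    ∑ j ∈ J, a j + ∑ i ∈ I, b i ≤ ∑ j ∈ J, e (σ j) + ∑ i ∈ I, e (τ i) := by
  have hcolumn : ∀ j ∈ J, ∑ i ∈ I, (Γ i j : ℤ) = a j - e (σ j) := fun j hj => by
    rw [← h.column_sum (hJ hj)]
    refine sum_subset hI fun i hi hiI => ?_
    by_contra hne
    exact hiI (hIJ j hj i hi (h.le_of_ne_zero hi (hJ hj) (Nat.cast_ne_zero.1 hne)))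
  have hrow : ∀ i ∈ I, ∑ j ∈ J, (Γ i j : ℤ) ≤ e (τ i) - b i := fun i hi => by
    rw [← h.row_sum (hI hi)]
    exact sum_le_sum_of_subset_of_nonneg hJ fun _ _ _ => Nat.cast_nonneg _
  have hflow : ∑ j ∈ J, (a j - e (σ j)) ≤ ∑ i ∈ I, (e (τ i) - b i) :=
    calc ∑ j ∈ J, (a j - e (σ j)) = ∑ j ∈ J, ∑ i ∈ I, (Γ i j : ℤ) :=
          sum_congr rfl fun j hj => (hcolumn j hj).symm
      _ = ∑ i ∈ I, ∑ j ∈ J, (Γ i j : ℤ) := sum_comm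
      _ ≤ ∑ i ∈ I, (e (τ i) - b i) := sum_le_sum hrow
  rw [sum_sub_distrib, sum_sub_distrib] at hflow
  linarith

theorem e_datumPath_le (h : IsBalDatum b e a m n σ τ Γ) (he : Incr e (m + n)) (ha : Incr a n)
    {q : ℕ} (hq : q ∈ Icc 1 n) : e (q + datumPath e m n σ τ q) ≤ a q := by
  set k := q + datumPath e m n σ τ q with hk
  have hkmem : k ∈ Icc 1 (m + n) := by
    have hle : datumPath e m n σ τ q ≤ m := countLT_le _ _ _
    rw [mem_Icc] at hq ⊢
    omega
  by_contra! hlt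
  have hσ : q ≤ countLT (e ∘ σ) n (e k) :=
    ((le_countLT_iff ha.monotoneOn hq _).2 hlt).trans (countLT_anti h.e_le_a _)
  have hτ : datumPath e m n σ τ q ≤ countLT (e ∘ τ) m (e k) :=
    countLT_mono _ _ ((rankThreshold_le_iff hq _).2 hσ)
  have hcount : k ≤ countLT e (m + n) (e k) := by
    rw [h.isShuffle.countLT_eq]
    omega
  exact ((le_countLT_iff he.monotoneOn hkmem _).1 hcount).false

theorem countLT_right_lt (h : IsBalDatum b e a m n σ τ Γ) (hb : Incr b m) {p : ℕ}
    (hp : p ∈ Icc 1 m) : countLT (e ∘ τ) m (b p) < p := by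
  by_contra! hle
  have hp' : p ≤ countLT b m (b p) := hle.trans (countLT_anti h.b_le_e _)
  exact ((le_countLT_iff hb.monotoneOn hp _).1 hp').false

theorem le_countLT_left (h : IsBalDatum b e a m n σ τ Γ) (hb : Incr b m) (he : Incr e (m + n))
    {p q : ℕ} (hp : p ∈ Icc 1 m) (hq : q ∈ Icc 1 (n + 1)) (hlt : e (p + q - 1) < b p) :
    q ≤ countLT (e ∘ σ) n (b p) := by
  have hτ := h.countLT_right_lt hb hp
  have hmem : p + q - 1 ∈ Icc 1 (m + n) := by
    rw [mem_Icc] at hp hq ⊢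
    omega
  have hcount : p + q - 1 ≤ countLT e (m + n) (b p) :=
    (le_countLT_iff he.monotoneOn hmem _).2 hlt
  rw [h.isShuffle.countLT_eq] at hcount
  omega

theorem b_le_e_of_le_datumPath (h : IsBalDatum b e a m n σ τ Γ) (hb : Incr b m)
    (he : Incr e (m + n)) {q : ℕ} (hq : q ∈ Icc 1 n) {p : ℕ}
    (hp : p ∈ Icc 1 (datumPath e m n σ τ q)) : b p ≤ e (p + q - 1) := by
  have hpm : p ∈ Icc 1 m := Icc_subset_Icc_right (countLT_le _ _ _) hp
  by_contra! hlt
  have hσ := h.le_countLT_left hb he hpm (Icc_subset_Icc_right (Nat.le_succ n) hq) hlt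
  have hτ : datumPath e m n σ τ q ≤ countLT (e ∘ τ) m (b p) :=
    countLT_mono _ _ ((rankThreshold_le_iff hq _).2 hσ)
  exact ((mem_Icc.1 hp).2.trans hτ).not_gt (h.countLT_right_lt hb hpm)

theorem b_le_e_top (h : IsBalDatum b e a m n σ τ Γ) (hb : Incr b m) (he : Incr e (m + n)) {p : ℕ}
    (hp : p ∈ Icc 1 m) : b p ≤ e (p + n) := by
  by_contra! hlt
  have hσ : n + 1 ≤ countLT (e ∘ σ) n (b p) := h.le_countLT_left hb he hp (by simp) hlt
  exact hσ.not_gt (Nat.lt_succ_of_le (countLT_le _ _ _))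

theorem sum_datumPath_le (h : IsBalDatum b e a m n σ τ Γ) (hb : Incr b m) (ha : Incr a n) {q : ℕ}
    (hq : q ∈ Icc 1 n) :
    ∑ j ∈ Icc 1 q, a j + ∑ i ∈ Icc 1 (datumPath e m n σ τ q), b i ≤
      ∑ k ∈ Icc 1 (q + datumPath e m n σ τ q), e k := by
  set t := rankThreshold (e ∘ σ) n q
  have hqt : q ≤ countLT (e ∘ σ) n t := (rankThreshold_le_iff hq t).1 le_rfl
  have hqt' : countLT (e ∘ σ) n (t - 1) < q := by
    rw [← not_le, ← rankThreshold_le_iff hq]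
    exact (sub_one_lt t).not_ge
  obtain ⟨J, hJlow, hJhigh, rfl⟩ := exists_subsuperset_card_eq
    (monotone_filter_right (Icc 1 n) fun j _ (hj : e (σ j) < t - 1) => hj.trans (sub_one_lt t))
    hqt'.le hqt
  set I : Finset ℕ := {i ∈ Icc 1 m | e (τ i) < t}
  have hJt : ∀ j ∈ J, e (σ j) < t := fun j hj => (mem_filter.1 (hJhigh hj)).2
  have hJ : J ⊆ Icc 1 n := hJhigh.trans (filter_subset _ _)
  have hI : I ⊆ Icc 1 m := filter_subset _ _
  calc ∑ j ∈ Icc 1 #J, a j + ∑ i ∈ Icc 1 #I, b i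
      ≤ ∑ j ∈ J, a j + ∑ i ∈ I, b i := add_le_add (ha.sum_Icc_card_le hJ) (hb.sum_Icc_card_le hI)
    _ ≤ ∑ j ∈ J, e (σ j) + ∑ i ∈ I, e (τ i) :=
        h.sum_add_sum_le hJ hI fun j hj i hi hij => mem_filter.2 ⟨hi, hij.trans_lt (hJt j hj)⟩
    _ ≤ ∑ k ∈ Icc 1 (#J + #I), e k := by
        refine h.isShuffle.sum_add_sum_le hJ hI (v := t - 1)
          (fun j hj => Int.le_sub_one_of_lt (hJt j hj))
          (fun i hi => Int.le_sub_one_of_lt (mem_filter.1 hi).2)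
          (fun j hj hjJ => ?_) (fun i hi hiI => ?_)
        · by_contra! hlt
          exact hjJ (hJlow (mem_filter.2 ⟨hj, hlt⟩))
        · by_contra! hlt
          exact hiI (mem_filter.2 ⟨hi, hlt.trans (sub_one_lt t)⟩)

theorem isBalPath (h : IsBalDatum b e a m n σ τ Γ) (hb : Incr b m) (he : Incr e (m + n))
    (ha : Incr a n) : IsBalPath b e a m n (datumPath e m n σ τ) where
  monotoneOn := monotoneOn_datumPath e m n σ τ
  le _ _ := countLT_le _ _ _
  e_le_a _ hq := h.e_datumPath_le he ha hq
  b_le_e _ hq _ hp := h.b_le_e_of_le_datumPath hb he hq hp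
  b_le_e_top _ hp := h.b_le_e_top hb he hp
  sum_le _ hq := h.sum_datumPath_le hb ha hq

end IsBalDatum

section Repetition

variable {M : ℕ}

theorem repT_eq_of_le_of_lt (u : ℕ → ℤ) {r k : ℕ} (hk : 0 < k) (hle : k ≤ M * r)
    (hlt : M * r < k + M) : repT u M k = u r := by
  have hdiv : (k - 1) / M = r - 1 := by
    obtain ⟨r, rfl⟩ : ∃ s, r = s + 1 :=
      Nat.exists_eq_add_of_le' (Nat.pos_of_mul_pos_left (hk.trans_le hle))
    rw [mul_add_one] at hle hlt
    refine Nat.div_eq_of_lt_le ?_ ?_ <;> rw [mul_comm] <;> grind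
  have hr : r ≠ 0 := by
    rintro rfl
    omega
  rw [repT, hdiv, Nat.sub_add_cancel (Nat.pos_of_ne_zero hr)]

theorem Incr.repT {u : ℕ → ℤ} {N : ℕ} (hu : Incr u N) (hM : 0 < M) :
    Incr (repT u M) (M * N) := by
  intro i j hi hij hj
  refine hu _ _ (Nat.le_add_left 1 _) ?_ ?_
  · exact Nat.add_le_add_right (Nat.div_le_div_right (Nat.sub_le_sub_right hij 1)) 1
  · rw [Nat.succ_le_iff, Nat.div_lt_iff_lt_mul hM, mul_comm]
    omega

theorem sum_Icc_repT (u : ℕ → ℤ) (M k : ℕ) :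
    ∑ i ∈ Icc 1 (M * k), repT u M i = M * ∑ i ∈ Icc 1 k, u i := by
  induction k with
  | zero => simp
  | succ k ih =>
    have hblock : ∀ i ∈ Ioc (M * k) (M * k + M), repT u M i = u (k + 1) := by
      intro i hi
      rw [mem_Ioc] at hi
      exact repT_eq_of_le_of_lt u (by omega) hi.2 (by rw [mul_add_one]; omega)
    have hsplit := sum_Ioc_consecutive (repT u M) (Nat.zero_le (M * k)) (Nat.le_add_right _ M)
    simp only [← Icc_add_one_left_eq_Ioc, zero_add] at hsplit hblock
    rw [mul_add_one, ← hsplit, ih, sum_congr rfl hblock, sum_Icc_succ_top (by omega)]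
    simp [mul_add]

theorem mul_ceilDiv_lt (hM : 0 < M) (y : ℕ) : M * (y ⌈/⌉ M) < y + M := by
  have := Nat.mul_div_le (y + M - 1) M
  rw [Nat.ceilDiv_eq_add_pred_div]
  omega

theorem add_sum_Icc_le_of_forall_le {α : Type*} [AddCommMonoid α] [PartialOrder α]
    [IsOrderedAddMonoid α] {b e : ℕ → α} {c : α} {t y z : ℕ} (hyz : y ≤ z)
    (hbe : ∀ s ∈ Ioc y z, b s ≤ e (t + s))
    (hy : c + ∑ i ∈ Icc 1 y, b i ≤ ∑ k ∈ Icc 1 (t + y), e k) :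
    c + ∑ i ∈ Icc 1 z, b i ≤ ∑ k ∈ Icc 1 (t + z), e k := by
  induction z, hyz using Nat.le_induction with
  | base => exact hy
  | succ z hyz ih =>
    have hz := ih fun s hs => hbe s (Ioc_subset_Ioc_right (Nat.le_succ z) hs)
    have hlast := hbe (z + 1) (mem_Ioc.2 ⟨by omega, le_rfl⟩)
    rw [← add_assoc] at hlast ⊢
    rw [sum_Icc_succ_top (by omega), sum_Icc_succ_top (by omega), ← add_assoc]
    exact add_le_add hz hlast

end Repetition

namespace IsBalPath

variable {b e a : ℕ → ℤ} {m n M : ℕ} {R : ℕ → ℕ}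

theorem b_le_e_of_repT (h : IsBalPath (repT b M) (repT e M) (repT a M) (M * m) (M * n) R)
    (hM : 0 < M) {q : ℕ} (hq : q ∈ Icc 1 n) {p : ℕ} (hp : p ∈ Icc 1 (R (M * q) ⌈/⌉ M)) :
    b p ≤ e (p + q - 1) := by
  obtain ⟨hp1, hpR⟩ := mem_Icc.1 hp
  obtain ⟨hq1, hqn⟩ := mem_Icc.1 hq
  have hMp : M ≤ M * p := Nat.le_mul_of_pos_right M hp1
  have hMq : M ≤ M * q := Nat.le_mul_of_pos_right M hq1
  have hpR' : M * p < R (M * q) + M :=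
    (Nat.mul_le_mul_left M hpR).trans_lt (mul_ceilDiv_lt hM _)
  have hle := h.b_le_e (M * q) (mem_Icc.2 ⟨by omega, Nat.mul_le_mul_left M hqn⟩)
    (M * p - M + 1) (mem_Icc.2 ⟨by omega, by omega⟩)
  have hpq : M * (p + q - 1) = M * p + M * q - M := by rw [Nat.mul_sub_one, mul_add]
  rwa [repT_eq_of_le_of_lt b (r := p) (by omega) (by omega) (by omega),
    repT_eq_of_le_of_lt e (r := p + q - 1) (by omega) (by omega) (by omega)] at hle

theorem b_le_e_top_of_repT (h : IsBalPath (repT b M) (repT e M) (repT a M) (M * m) (M * n) R)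
    (hM : 0 < M) {p : ℕ} (hp : p ∈ Icc 1 m) : b p ≤ e (p + n) := by
  obtain ⟨hp1, hpm⟩ := mem_Icc.1 hp
  have hMp : M ≤ M * p := Nat.le_mul_of_pos_right M hp1
  have hMpm : M * p ≤ M * m := Nat.mul_le_mul_left M hpm
  have hle := h.b_le_e_top (M * p - M + 1) (mem_Icc.2 ⟨by omega, by omega⟩)
  rwa [repT_eq_of_le_of_lt b (r := p) (by omega) (by omega) (by omega),
    repT_eq_of_le_of_lt e (r := p + n) (by omega) (by rw [mul_add]; omega)
      (by rw [mul_add]; omega)] at hle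

theorem e_le_a_of_repT (h : IsBalPath (repT b M) (repT e M) (repT a M) (M * m) (M * n) R)
    (hM : 0 < M) {q : ℕ} (hq : q ∈ Icc 1 n) : e (q + R (M * q) ⌈/⌉ M) ≤ a q := by
  obtain ⟨hq1, hqn⟩ := mem_Icc.1 hq
  have hMq : M ≤ M * q := Nat.le_mul_of_pos_right M hq1
  have hlow := mul_ceilDiv_lt hM (R (M * q))
  have hhigh : R (M * q) ≤ M * (R (M * q) ⌈/⌉ M) := le_smul_ceilDiv hM
  have hle := h.e_le_a (M * q) (mem_Icc.2 ⟨by omega, Nat.mul_le_mul_left M hqn⟩)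
  rwa [repT_eq_of_le_of_lt a (r := q) (by omega) le_rfl (by omega),
    repT_eq_of_le_of_lt e (r := q + R (M * q) ⌈/⌉ M) (by omega) (by rw [mul_add]; omega)
      (by rw [mul_add]; omega)] at hle

theorem ceilDiv_le_of_repT (h : IsBalPath (repT b M) (repT e M) (repT a M) (M * m) (M * n) R)
    (hM : 0 < M) {q : ℕ} (hq : q ∈ Icc 1 n) : R (M * q) ⌈/⌉ M ≤ m := by
  obtain ⟨hq1, hqn⟩ := mem_Icc.1 hq
  exact (ceilDiv_le_iff_le_mul hM).2
    (h.le _ (mem_Icc.2 ⟨Nat.mul_pos hM hq1, Nat.mul_le_mul_left M hqn⟩))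

-- The inequality for the repeated tuples holds at `y = R (M * q)`. It persists up to the end of the
-- block containing `y`, because there each further step adds `e (q + r) - b r ≥ 0` to the slack.
theorem sum_le_of_repT (h : IsBalPath (repT b M) (repT e M) (repT a M) (M * m) (M * n) R)
    (hM : 0 < M) (he : Incr e (m + n)) {q : ℕ} (hq : q ∈ Icc 1 n) :
    ∑ j ∈ Icc 1 q, a j + ∑ i ∈ Icc 1 (R (M * q) ⌈/⌉ M), b i ≤
      ∑ k ∈ Icc 1 (q + R (M * q) ⌈/⌉ M), e k := by
  obtain ⟨hq1, hqn⟩ := mem_Icc.1 hq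
  set y := R (M * q)
  set r := y ⌈/⌉ M
  have hlow : M * r < y + M := mul_ceilDiv_lt hM y
  have hhigh : y ≤ M * r := le_smul_ceilDiv hM
  have hblock : ∀ s ∈ Ioc y (M * r), repT b M s ≤ repT e M (M * q + s) := by
    intro s hs
    obtain ⟨hys, hsr⟩ := mem_Ioc.1 hs
    have hr : 1 ≤ r := Nat.pos_of_mul_pos_left (by omega : 0 < M * r)
    have hrm : r ≤ m := h.ceilDiv_le_of_repT hM hq
    rw [repT_eq_of_le_of_lt b (r := r) (by omega) hsr (by omega),
      repT_eq_of_le_of_lt e (r := q + r) (by omega) (by rw [mul_add]; omega)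
        (by rw [mul_add]; omega)]
    calc b r ≤ e (r + q - 1) := h.b_le_e_of_repT hM hq (mem_Icc.2 ⟨hr, le_rfl⟩)
      _ ≤ e (q + r) := he _ _ (by omega) (by omega) (by omega)
  have hsum := add_sum_Icc_le_of_forall_le hhigh hblock
    (h.sum_le (M * q) (mem_Icc.2 ⟨Nat.mul_pos hM hq1, Nat.mul_le_mul_left M hqn⟩))
  rw [← mul_add, sum_Icc_repT, sum_Icc_repT, sum_Icc_repT, ← mul_add] at hsum
  exact le_of_mul_le_mul_left hsum (Nat.cast_pos.2 hM)

theorem of_repT (h : IsBalPath (repT b M) (repT e M) (repT a M) (M * m) (M * n) R) (hM : 0 < M)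
    (he : Incr e (m + n)) : IsBalPath b e a m n (fun q => R (M * q) ⌈/⌉ M) where
  monotoneOn q hq q' hq' hqq' := by
    have hmem : ∀ k ∈ Set.Icc 1 n, M * k ∈ Set.Icc 1 (M * n) :=
      fun k hk => ⟨Nat.mul_pos hM hk.1, Nat.mul_le_mul_left M hk.2⟩
    exact (gc_mul_ceilDiv hM).monotone_l
      (h.monotoneOn (hmem q hq) (hmem q' hq') (Nat.mul_le_mul_left M hqq'))
  le _ hq := h.ceilDiv_le_of_repT hM hq
  e_le_a _ hq := h.e_le_a_of_repT hM hq
  b_le_e _ hq _ hp := h.b_le_e_of_repT hM hq hp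
  b_le_e_top _ hp := h.b_le_e_top_of_repT hM hp
  sum_le _ hq := h.sum_le_of_repT hM he hq

end IsBalPath

/-- Theorem: if the `M`-fold repetition of a triple admits a balancing datum,
then so does the triple itself (integrality of the codimension-2
Boij–Söderberg cone). -/
theorem stmt4 (m n M : ℕ) (hm : 1 ≤ m) (hn : 1 ≤ n) (hM : 1 ≤ M)
    (b e a : ℕ → ℤ) (hb : Incr b m) (he : Incr e (m + n)) (ha : Incr a n)
    (hdeg : degT a n + degT b m = degT e (m + n))
    (h : HasBalDatum (repT b M) (repT e M) (repT a M) (M * m) (M * n)) :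
    HasBalDatum b e a m n := by
  obtain ⟨σ, τ, Γ, hΓ⟩ := h
  have hE : Incr (repT e M) (M * m + M * n) := mul_add M m n ▸ he.repT hM
  have hpath := hΓ.isBalPath (hb.repT hM) hE (ha.repT hM)
  exact (hpath.of_repT hM he).hasBalDatum he hdeg
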